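/- Let m, p, n, s, t, k be natural numbers with n ≤ p, s ≤ t and k > max(p, t), let a, b ∈ ℂ, and let φ(z) = a·z^p·conj(z)^n + b·z^s·conj(z)^t. Then for every z ∈ ℂ, (T_{conj∘φ} (w ↦ w^k))(z) = conj(a)·((n+k+m)!/(n+k+m−p)!)·z^{n+k−p} + conj(b)·((t+k+m)!/(t+k+m−s)!)·z^{t+k−s}. -/

import Mathlib

open MeasureTheory Complex ComplexOrder

/-- Weight function: `|z|^{2m} e^{-|z|^2}` as a complex number. -/
noncomputable def fsWt (m : ℕ) (z : ℂ) : ℂ :=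
  ((‖z‖ : ℝ) : ℂ) ^ (2 * m) * ((Real.exp (-‖z‖ ^ 2) : ℝ) : ℂ)

/-- Fock–Sobolev reproducing kernel `K_m(z,w)`. -/
noncomputable def fsKernel (m : ℕ) (z w : ℂ) : ℂ :=
  ∑' j : ℕ, ((m.factorial : ℂ) / ((j + m).factorial : ℂ)) * (z * starRingEnd ℂ w) ^ j

/-- Toeplitz operator with symbol `ψ` acting on `f`, evaluated at `z`. -/
noncomputable def fsToeplitz (m : ℕ) (ψ f : ℂ → ℂ) (z : ℂ) : ℂ :=
  (1 / ((Real.pi : ℂ) * (m.factorial : ℂ))) *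
    ∫ w : ℂ, ψ w * f w * fsKernel m z w * fsWt m w

/-- Fock–Sobolev pairing `⟨g, h⟩`. -/
noncomputable def fsPair (m : ℕ) (g h : ℂ → ℂ) : ℂ :=
  ∫ z : ℂ, g z * starRingEnd ℂ (h z) * fsWt m z

/-- `‖g‖² = ⟨g, g⟩`. -/
noncomputable def fsNormSq (m : ℕ) (g : ℂ → ℂ) : ℂ := fsPair m g g

/-!
Integrating the kernel series termwise gives the orthogonal expansion
`T_ψ f = ∑ j, ⟨ψ f, e_j⟩ e_j / ‖e_j‖²` in the monomials `e_j(z) = z ^ j`. By rotation invariance of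
the weight, `⟨e_c, e_d⟩ = 0` for `c ≠ d`, while polar coordinates and the Gamma function give
`‖e_c‖² = π (c + m)!`. For `ψ f = w ^ c * conj w ^ d` we have `⟨ψ f, e_j⟩ = ⟨e_c, e_{d + j}⟩`,
so only the term `j = c - d` survives.
-/

section GaussianIntegrability

variable {V : Type*} [NormedAddCommGroup V] [InnerProductSpace ℝ V] [FiniteDimensional ℝ V]
  [MeasurableSpace V] [BorelSpace V]

lemma integrable_exp_neg_mul_norm_sq {b : ℝ} (hb : 0 < b) :
    Integrable fun x : V => Real.exp (-b * ‖x‖ ^ 2) := by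
  have h := (GaussianFourier.integrable_cexp_neg_mul_sq_norm_add (V := V) (b := (b : ℂ))
    (by simpa using hb) 0 0).norm
  refine h.congr (.of_forall fun x => ?_)
  simp [Complex.norm_exp, ← Complex.ofReal_pow]

lemma integrable_norm_pow_mul_exp_mul_exp_neg_mul_norm_sq (N : ℕ) (A : ℝ) {b : ℝ} (hb : 0 < b) :
    Integrable fun x : V => ‖x‖ ^ N * Real.exp (A * ‖x‖) * Real.exp (-b * ‖x‖ ^ 2) := by
  refine ((integrable_exp_neg_mul_norm_sq (half_pos hb)).const_mul
    (N.factorial * Real.exp ((A + 1) ^ 2 / (2 * b)))).mono' (by fun_prop)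
    (.of_forall fun x => ?_)
  have hpow : ‖x‖ ^ N ≤ N.factorial * Real.exp ‖x‖ := by
    have := Real.pow_div_factorial_le_exp ‖x‖ (norm_nonneg x) N
    rwa [div_le_iff₀' (by positivity)] at this
  have hsquare : ‖x‖ + A * ‖x‖ + -b * ‖x‖ ^ 2 ≤ (A + 1) ^ 2 / (2 * b) + -(b / 2) * ‖x‖ ^ 2 := by
    have hgap : (A + 1) ^ 2 / (2 * b) + -(b / 2) * ‖x‖ ^ 2 - (‖x‖ + A * ‖x‖ + -b * ‖x‖ ^ 2) =
        (b * ‖x‖ - (A + 1)) ^ 2 / (2 * b) := by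
      field_simp
      ring
    have hgap_nonneg : 0 ≤ (b * ‖x‖ - (A + 1)) ^ 2 / (2 * b) := by positivity
    linarith
  rw [Real.norm_of_nonneg (by positivity)]
  calc ‖x‖ ^ N * Real.exp (A * ‖x‖) * Real.exp (-b * ‖x‖ ^ 2)
      ≤ N.factorial * Real.exp ‖x‖ * Real.exp (A * ‖x‖) * Real.exp (-b * ‖x‖ ^ 2) := by gcongr
    _ = N.factorial * Real.exp (‖x‖ + A * ‖x‖ + -b * ‖x‖ ^ 2) := by
        rw [Real.exp_add, Real.exp_add, mul_assoc, mul_assoc, mul_assoc]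
    _ ≤ N.factorial * Real.exp ((A + 1) ^ 2 / (2 * b) + -(b / 2) * ‖x‖ ^ 2) := by gcongr
    _ = N.factorial * Real.exp ((A + 1) ^ 2 / (2 * b)) * Real.exp (-(b / 2) * ‖x‖ ^ 2) := by
        rw [Real.exp_add, mul_assoc]

end GaussianIntegrability

lemma continuous_fsWt (m : ℕ) : Continuous (fsWt m) := by
  unfold fsWt
  fun_prop

lemma fsWt_rotation (m : ℕ) (u : Circle) (w : ℂ) : fsWt m (rotation u w) = fsWt m w := by
  simp only [fsWt, LinearIsometryEquiv.norm_map]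

lemma norm_fsWt (m : ℕ) (w : ℂ) : ‖fsWt m w‖ = ‖w‖ ^ (2 * m) * Real.exp (-‖w‖ ^ 2) := by
  simp only [fsWt, norm_mul, norm_pow, Complex.norm_real, norm_norm, Real.norm_of_nonneg,
    Real.exp_nonneg]

lemma fsPair_comp_rotation (m : ℕ) (g h : ℂ → ℂ) (u : Circle) :
    fsPair m (g ∘ rotation u) (h ∘ rotation u) = fsPair m g h := by
  have hrot := integral_comp (rotation u) fun w => g w * starRingEnd ℂ (h w) * fsWt m w
  simpa only [fsPair, Function.comp_apply, fsWt_rotation] using hrot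

lemma exists_circle_pow_mul_conj_pow_eq_neg_one {c d : ℕ} (hcd : c ≠ d) :
    ∃ u : Circle, (u : ℂ) ^ c * starRingEnd ℂ (u : ℂ) ^ d = -1 := by
  have hsub : (c : ℂ) - d ≠ 0 := sub_ne_zero.mpr (by exact_mod_cast hcd)
  refine ⟨Circle.exp (Real.pi / (c - d)), ?_⟩
  rw [Circle.coe_exp, ← Complex.exp_conj, ← Complex.exp_nat_mul, ← Complex.exp_nat_mul,
    ← Complex.exp_add, ← Complex.exp_pi_mul_I, map_mul, Complex.conj_ofReal, Complex.conj_I]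
  congr 1
  push_cast
  field_simp
  ring

lemma fsPair_pow_pow_of_ne (m : ℕ) {c d : ℕ} (hcd : c ≠ d) :
    fsPair m (fun w => w ^ c) (fun w => w ^ d) = 0 := by
  obtain ⟨u, hu⟩ := exists_circle_pow_mul_conj_pow_eq_neg_one hcd
  have hneg : fsPair m ((fun w => w ^ c) ∘ rotation u) ((fun w => w ^ d) ∘ rotation u) =
      -fsPair m (fun w => w ^ c) (fun w => w ^ d) := by
    simp only [fsPair, Function.comp_apply, rotation_apply, map_pow, map_mul, ← integral_neg]
    congr 1 with w
    linear_combination (w ^ c * starRingEnd ℂ w ^ d * fsWt m w) * hu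
  rw [fsPair_comp_rotation] at hneg
  exact self_eq_neg.mp hneg

lemma fsNormSq_pow (m c : ℕ) : fsNormSq m (fun w => w ^ c) = Real.pi * (c + m).factorial := by
  have hradial (w : ℂ) : w ^ c * starRingEnd ℂ (w ^ c) * fsWt m w =
      ((‖w‖ ^ ((2 * (c + m) : ℕ) : ℝ) * Real.exp (-‖w‖ ^ (2 : ℝ)) : ℝ) : ℂ) := by
    rw [map_pow, ← mul_pow, Complex.mul_conj', fsWt, Real.rpow_natCast, Real.rpow_two]
    push_cast
    ring
  have hexponent : (((2 * (c + m) : ℕ) : ℝ) + 2) / 2 = (c + m : ℕ) + 1 := by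
    push_cast
    ring
  simp only [fsNormSq, fsPair, hradial]
  rw [integral_complex_ofReal, Complex.integral_rpow_mul_exp_neg_rpow one_le_two
    ((neg_neg_of_pos two_pos).trans_le (Nat.cast_nonneg _)), hexponent, Real.Gamma_nat_eq_factorial,
    mul_div_cancel_left₀ _ two_ne_zero, Complex.ofReal_mul, Complex.ofReal_natCast]

section Kernel

variable (m : ℕ) (z w : ℂ)

lemma continuous_fsKernel_term (j : ℕ) :
    Continuous fun w : ℂ => ((m.factorial : ℂ) / ((j + m).factorial : ℂ)) *
      (z * starRingEnd ℂ w) ^ j := by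
  fun_prop

lemma norm_fsKernel_term_le (j : ℕ) :
    ‖((m.factorial : ℂ) / ((j + m).factorial : ℂ)) * (z * starRingEnd ℂ w) ^ j‖ ≤
      (‖z‖ * ‖w‖) ^ j / j.factorial := by
  have hratio : (m.factorial : ℝ) / (j + m).factorial ≤ 1 / j.factorial := by
    rw [div_le_div_iff₀ (by positivity) (by positivity), one_mul, mul_comm]
    exact_mod_cast Nat.le_of_dvd (Nat.factorial_pos _)
      (Nat.factorial_mul_factorial_dvd_factorial_add j m)
  calc ‖((m.factorial : ℂ) / ((j + m).factorial : ℂ)) * (z * starRingEnd ℂ w) ^ j‖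
      = m.factorial / (j + m).factorial * (‖z‖ * ‖w‖) ^ j := by
        simp only [norm_mul, norm_div, norm_pow, Complex.norm_conj, Complex.norm_natCast]
    _ ≤ 1 / j.factorial * (‖z‖ * ‖w‖) ^ j := by gcongr
    _ = (‖z‖ * ‖w‖) ^ j / j.factorial := one_div_mul_eq_div _ _

lemma hasSum_pow_div_factorial (x : ℝ) :
    HasSum (fun j : ℕ => x ^ j / j.factorial) (Real.exp x) := by
  rw [Real.exp_eq_exp_ℝ]
  exact NormedSpace.expSeries_div_hasSum_exp x

lemma hasSum_fsKernel :
    HasSum (fun j : ℕ => ((m.factorial : ℂ) / ((j + m).factorial : ℂ)) *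
      (z * starRingEnd ℂ w) ^ j) (fsKernel m z w) :=
  (Summable.of_norm_bounded (hasSum_pow_div_factorial _).summable
    (norm_fsKernel_term_le m z w)).hasSum

lemma norm_fsKernel_le : ‖fsKernel m z w‖ ≤ Real.exp (‖z‖ * ‖w‖) :=
  tsum_of_norm_bounded (hasSum_pow_div_factorial _) (norm_fsKernel_term_le m z w)

lemma stronglyMeasurable_fsKernel : StronglyMeasurable (fsKernel m z) := by
  refine stronglyMeasurable_of_tendsto Filter.atTop (fun N => ?_)
    (tendsto_pi_nhds.mpr fun w => (hasSum_fsKernel m z w).tendsto_sum_nat)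
  exact (continuous_finsetSum _ fun j _ => continuous_fsKernel_term m z j).stronglyMeasurable

end Kernel

/-- The growth condition on `g` under which it can be integrated termwise against the kernel
series: `g` is integrable against the weight times every exponential `e^{r|w|}`. -/
def FsExpIntegrable (m : ℕ) (g : ℂ → ℂ) : Prop :=
  ∀ r : ℝ, Integrable fun w => g w * Real.exp (r * ‖w‖) * fsWt m w

namespace FsExpIntegrable

variable {m : ℕ} {g : ℂ → ℂ}

lemma pow_mul_conj_pow (m c d : ℕ) :
    FsExpIntegrable m fun w => w ^ c * starRingEnd ℂ w ^ d := by
  intro r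
  have := continuous_fsWt m
  refine (integrable_norm_pow_mul_exp_mul_exp_neg_mul_norm_sq (c + d + 2 * m) r one_pos).mono'
    (Continuous.aestronglyMeasurable (by fun_prop)) (.of_forall fun w => le_of_eq ?_)
  simp only [norm_mul, norm_pow, Complex.norm_conj, Complex.norm_real, Real.norm_eq_abs,
    Real.abs_exp, norm_fsWt, neg_one_mul]
  ring

lemma pow_mul_conj_pow_mul_pow (m c d k : ℕ) :
    FsExpIntegrable m fun w => w ^ c * starRingEnd ℂ w ^ d * w ^ k := by
  simpa only [pow_add, mul_right_comm] using pow_mul_conj_pow m (c + k) d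

lemma const_mul (hg : FsExpIntegrable m g) (α : ℂ) : FsExpIntegrable m fun w => α * g w := by
  intro r
  simpa only [mul_assoc] using (hg r).const_mul α

lemma aestronglyMeasurable_mul {f : ℂ → ℂ} (hg : FsExpIntegrable m g)
    (hf : AEStronglyMeasurable f) : AEStronglyMeasurable fun w => g w * f w * fsWt m w := by
  have hprod := (hg 0).aestronglyMeasurable.mul hf
  refine hprod.congr (.of_forall fun w => ?_)
  simp only [Pi.mul_apply, zero_mul, Real.exp_zero, Complex.ofReal_one, mul_one,
    mul_right_comm]

lemma integrable_mul_fsKernel (hg : FsExpIntegrable m g) (z : ℂ) :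
    Integrable fun w => g w * fsKernel m z w * fsWt m w := by
  refine (hg ‖z‖).mono
    (hg.aestronglyMeasurable_mul (stronglyMeasurable_fsKernel m z).aestronglyMeasurable)
    (.of_forall fun w => ?_)
  simp only [norm_mul, Complex.norm_real, Real.norm_eq_abs, Real.abs_exp]
  gcongr
  exact norm_fsKernel_le m z w

lemma hasSum_integral_mul_fsKernel (hg : FsExpIntegrable m g) (z : ℂ) :
    HasSum (fun j : ℕ => ∫ w, g w *
        (((m.factorial : ℂ) / ((j + m).factorial : ℂ)) * (z * starRingEnd ℂ w) ^ j) * fsWt m w)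
      (∫ w, g w * fsKernel m z w * fsWt m w) := by
  have hexp (w : ℂ) := ((hasSum_pow_div_factorial (‖z‖ * ‖w‖)).mul_left ‖g w‖).mul_right ‖fsWt m w‖
  refine hasSum_integral_of_dominated_convergence
    (fun j w => ‖g w‖ * ((‖z‖ * ‖w‖) ^ j / j.factorial) * ‖fsWt m w‖) (fun j => ?_)
    (fun j => .of_forall fun w => ?_) (.of_forall fun w => (hexp w).summable) ?_
    (.of_forall fun w => ((hasSum_fsKernel m z w).mul_left _).mul_right _)
  · exact hg.aestronglyMeasurable_mul (continuous_fsKernel_term m z j).aestronglyMeasurable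
  · rw [norm_mul, norm_mul]
    gcongr
    exact norm_fsKernel_term_le m z w j
  · refine (hg ‖z‖).norm.congr (.of_forall fun w => ?_)
    simp only [(hexp w).tsum_eq, norm_mul, Complex.norm_real, Real.norm_eq_abs, Real.abs_exp]

end FsExpIntegrable

lemma hasSum_fsToeplitz {m : ℕ} {ψ f : ℂ → ℂ} (h : FsExpIntegrable m fun w => ψ w * f w) (z : ℂ) :
    HasSum (fun j : ℕ => fsPair m (fun w => ψ w * f w) (fun w => w ^ j) /
      fsNormSq m (fun w => w ^ j) * z ^ j) (fsToeplitz m ψ f z) := by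
  refine ((h.hasSum_integral_mul_fsKernel z).mul_left _).congr_fun fun j => ?_
  have hterm (w : ℂ) : ψ w * f w * (((m.factorial : ℂ) / ((j + m).factorial : ℂ)) *
      (z * starRingEnd ℂ w) ^ j) * fsWt m w = (m.factorial / (j + m).factorial * z ^ j) *
      (ψ w * f w * starRingEnd ℂ (w ^ j) * fsWt m w) := by
    rw [map_pow]
    ring
  simp only [hterm, integral_const_mul, fsNormSq_pow]
  rw [← fsPair]
  field_simp

lemma fsToeplitz_add {m : ℕ} {ψ₁ ψ₂ f : ℂ → ℂ}
    (h₁ : FsExpIntegrable m fun w => ψ₁ w * f w)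
    (h₂ : FsExpIntegrable m fun w => ψ₂ w * f w) (z : ℂ) :
    fsToeplitz m (fun w => ψ₁ w + ψ₂ w) f z = fsToeplitz m ψ₁ f z + fsToeplitz m ψ₂ f z := by
  simp only [fsToeplitz, add_mul]
  rw [integral_add (h₁.integrable_mul_fsKernel z) (h₂.integrable_mul_fsKernel z), mul_add]

lemma fsToeplitz_const_mul (m : ℕ) (α : ℂ) (ψ f : ℂ → ℂ) (z : ℂ) :
    fsToeplitz m (fun w => α * ψ w) f z = α * fsToeplitz m ψ f z := by
  simp only [fsToeplitz, mul_assoc, integral_const_mul]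
  ring

lemma fsPair_pow_mul_conj_pow_mul_pow (m c d k j : ℕ) :
    fsPair m (fun w => w ^ c * starRingEnd ℂ w ^ d * w ^ k) (fun w => w ^ j) =
      fsPair m (fun w => w ^ (c + k)) (fun w => w ^ (d + j)) := by
  simp only [fsPair, map_pow]
  congr 1 with w
  ring

lemma fsToeplitz_pow_mul_conj_pow (m : ℕ) {c d k : ℕ} (hd : d ≤ c + k) (z : ℂ) :
    fsToeplitz m (fun w => w ^ c * starRingEnd ℂ w ^ d) (fun w => w ^ k) z =
      ((c + k + m).factorial : ℂ) / ((c + k + m - d).factorial : ℂ) * z ^ (c + k - d) := by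
  have hsum := hasSum_fsToeplitz (FsExpIntegrable.pow_mul_conj_pow_mul_pow m c d k) z
  simp only [fsPair_pow_mul_conj_pow_mul_pow] at hsum
  have hvanish (j : ℕ) (hj : j ≠ c + k - d) :
      fsPair m (fun w => w ^ (c + k)) (fun w => w ^ (d + j)) /
        fsNormSq m (fun w => w ^ j) * z ^ j = 0 := by
    rw [fsPair_pow_pow_of_ne m (by omega), zero_div, zero_mul]
  rw [hsum.unique (hasSum_single _ hvanish), Nat.add_sub_cancel' hd, ← fsNormSq, fsNormSq_pow,
    fsNormSq_pow, mul_div_mul_left _ _ (Complex.ofReal_ne_zero.mpr Real.pi_ne_zero),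
    Nat.sub_add_comm hd]

theorem stmt3_general (m p n s t k : ℕ) (hp : p ≤ n + k) (hs : s ≤ t + k)
    (a b : ℂ) (φ : ℂ → ℂ)
    (hφ : φ = fun z => a * z ^ p * (starRingEnd ℂ z) ^ n + b * z ^ s * (starRingEnd ℂ z) ^ t)
    (z : ℂ) :
    fsToeplitz m (fun w => starRingEnd ℂ (φ w)) (fun w => w ^ k) z =
      starRingEnd ℂ a * (((n + k + m).factorial : ℂ) / ((n + k + m - p).factorial : ℂ)) *
          z ^ (n + k - p)
      + starRingEnd ℂ b * (((t + k + m).factorial : ℂ) / ((t + k + m - s).factorial : ℂ)) *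
          z ^ (t + k - s) := by
  have hconj : (fun w => starRingEnd ℂ (φ w)) = fun w =>
      starRingEnd ℂ a * (w ^ n * starRingEnd ℂ w ^ p) +
        starRingEnd ℂ b * (w ^ t * starRingEnd ℂ w ^ s) := by
    funext w
    simp only [hφ, map_add, map_mul, map_pow, Complex.conj_conj]
    ring
  have hint (α : ℂ) (c d : ℕ) :
      FsExpIntegrable m fun w => α * (w ^ c * starRingEnd ℂ w ^ d) * w ^ k := by
    simpa only [mul_assoc] using (FsExpIntegrable.pow_mul_conj_pow_mul_pow m c d k).const_mul α
  rw [hconj, fsToeplitz_add (hint _ n p) (hint _ t s), fsToeplitz_const_mul,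
    fsToeplitz_const_mul, fsToeplitz_pow_mul_conj_pow m hp, fsToeplitz_pow_mul_conj_pow m hs,
    mul_assoc, mul_assoc]

theorem stmt3 (m p n s t k : ℕ) (hn : n ≤ p) (hs : s ≤ t) (hk : k > max p t)
    (a b : ℂ) (φ : ℂ → ℂ) (hφ : φ = fun z => a * z ^ p * (starRingEnd ℂ z) ^ n + b * z ^ s * (starRingEnd ℂ z) ^ t) :
    ∀ z : ℂ, fsToeplitz m (fun w => starRingEnd ℂ (φ w)) (fun w => w ^ k) z =
      starRingEnd ℂ a * (((n + k + m).factorial : ℂ) / ((n + k + m - p).factorial : ℂ)) *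
          z ^ (n + k - p)
      + starRingEnd ℂ b * (((t + k + m).factorial : ℂ) / ((t + k + m - s).factorial : ℂ)) *
          z ^ (t + k - s) := by
  have hpk : p ≤ k := (le_max_left p t).trans hk.le
  exact stmt3_general m p n s t k (by omega) (by omega) a b φ hφ
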